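/- Let n ≥ 3 be an integer and let y1, y2, y3, y4 be integers (regarded as residues mod n). Set z1 := min(d_n(y1,y2), d_n(y2,y1)), z3 := min(d_n(y3,y4), d_n(y4,y3)), and S := f_n(y1,y3) + f_n(y1,y4) + f_n(y2,y3) + f_n(y2,y4) − 4·⌊n/2⌋·⌊(n−1)/2⌋. If y1 ∈ (y3,y4) and y2 ∈ (y4,y3), or y2 ∈ (y3,y4) and y1 ∈ (y4,y3), then 4S ≥ z1² + (n − z1)² + z3² + (n − z3)² − 2Δ_n. -/

import Mathlib

/-!
When the chords `y1 y2` and `y3 y4` cross, the four points cut the circle into consecutive arcs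
`a, b, c, e` with `a + b + c + e = n`, and each of the four pairs in `S` bounds one arc. Since
`2 f = d² + (n - d)² - n` and `4⌊n/2⌋⌊(n-1)/2⌋ = n² - 2n + Δ`, one gets
`4S = 4(a² + b² + c² + e²) - 4Δ`. The two arcs cut off by each chord are sums of two neighbouring
arcs, so the right-hand side is `(b + c)² + (e + a)² + (a + b)² + (c + e)² - 2Δ`. The difference
of the two sides is `(a - b)² + (b - c)² + (c - e)² + (e - a)² - 2Δ`, which is nonnegative by
`two_mul_delta_le`.
-/

/-- Clockwise distance on a circle with `n` positions: `(v - u) mod n`. -/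
def dn (n u v : ℤ) : ℤ := (v - u) % n

/-- `C(m,2) = m(m-1)/2`. -/
def c2 (m : ℤ) : ℤ := m * (m - 1) / 2

/-- `f_n(u,v) = C(d_n(u,v),2) + C(n - d_n(u,v),2)`. -/
def fn (n u v : ℤ) : ℤ := c2 (dn n u v) + c2 (n - dn n u v)

/-- `Δ_k = 1` if `k` is odd, `0` otherwise. -/
def delta (k : ℤ) : ℤ := if Odd k then 1 else 0

/-- `y ∈ [a,b]` on the circle: `d_n(a,y) ≤ d_n(a,b)`. -/
def memCC (n a b y : ℤ) : Prop := dn n a y ≤ dn n a b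

/-- `y ∈ (a,b)` on the circle: `0 < d_n(a,y) < d_n(a,b)`. -/
def memOO (n a b y : ℤ) : Prop := 0 < dn n a y ∧ dn n a y < dn n a b

lemma dn_range (n u v : ℤ) (hn : 3 ≤ n) : 0 ≤ dn n u v ∧ dn n u v < n :=
  ⟨Int.emod_nonneg _ (by omega), Int.emod_lt_of_pos _ (by omega)⟩

lemma dn_add (n u v w : ℤ) (hn : 3 ≤ n) :
    dn n u v + dn n v w = dn n u w ∨ dn n u v + dn n v w = dn n u w + n := by
  have h1 := dn_range n u v hn
  have h2 := dn_range n v w hn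
  have e : dn n u w = (dn n u v + dn n v w) % n := by
    unfold dn
    rw [← Int.add_emod]
    congr 1
    ring
  rcases lt_or_ge (dn n u v + dn n v w) n with h | h
  · left
    rw [e, Int.emod_eq_of_lt (by omega) h]
  · right
    rw [e, ← Int.sub_emod_right, Int.emod_eq_of_lt (by omega) (by omega)]
    ring

lemma dn_self (n u : ℤ) : dn n u u = 0 := by simp [dn]

lemma two_mul_c2 (m : ℤ) : 2 * c2 m = m * (m - 1) := by
  unfold c2
  apply Int.mul_ediv_cancel'
  rw [mul_comm]
  simpa using (Int.even_mul_pred_self m).two_dvd.trans (by rw [mul_comm])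

lemma two_mul_fn (n u v : ℤ) :
    2 * fn n u v = dn n u v ^ 2 + (n - dn n u v) ^ 2 - n := by
  unfold fn
  linear_combination two_mul_c2 (dn n u v) + two_mul_c2 (n - dn n u v)

lemma four_mul_floor (n : ℤ) :
    4 * ((n / 2) * ((n - 1) / 2)) = n ^ 2 - 2 * n + delta n := by
  unfold delta
  rcases Int.even_or_odd' n with ⟨k, rfl | rfl⟩
  · rw [if_neg (by simp), show 2 * k / 2 = k by omega, show (2 * k - 1) / 2 = k - 1 by omega]
    ring
  · rw [if_pos (by simp), show (2 * k + 1) / 2 = k by omega, show (2 * k + 1 - 1) / 2 = k by omega]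
    ring

/-- If four integers have odd sum, then the differences around the 4-cycle are not all zero;
since they add up to zero, at least two of them are nonzero. -/
lemma two_mul_delta_le (n a b c e : ℤ) (hs : a + b + c + e = n) :
    2 * delta n ≤ (a - b) ^ 2 + (b - c) ^ 2 + (c - e) ^ 2 + (e - a) ^ 2 := by
  unfold delta
  split_ifs with h
  · have key : ∀ x : ℤ, x ≤ x ^ 2 ∧ -x ≤ x ^ 2 := fun x =>
      ⟨Int.le_self_sq x, by simpa using Int.le_self_sq (-x)⟩
    obtain ⟨k, hk⟩ := h
    have h1 := key (a - b)
    have h2 := key (b - c)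
    have h3 := key (c - e)
    have h4 := key (e - a)
    generalize (a - b) ^ 2 = p at *
    generalize (b - c) ^ 2 = q at *
    generalize (c - e) ^ 2 = r at *
    generalize (e - a) ^ 2 = s at *
    omega
  · positivity

lemma min_sq_add (n x y : ℤ) (h : x + y = n) :
    min x y ^ 2 + (n - min x y) ^ 2 = x ^ 2 + y ^ 2 := by
  subst h
  rcases min_choice x y with h | h <;> rw [h] <;> ring

/-- The inequality for the cyclic order `y3, y1, y4, y2`. -/
lemma bound_of_crossing (n : ℤ) (hn : 3 ≤ n) (y1 y2 y3 y4 : ℤ)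
    (h1 : memOO n y3 y4 y1) (h2 : memOO n y4 y3 y2) :
    4 * (fn n y1 y3 + fn n y1 y4 + fn n y2 y3 + fn n y2 y4 -
        4 * ((n / 2) * ((n - 1) / 2))) ≥
      (min (dn n y1 y2) (dn n y2 y1)) ^ 2 +
        (n - min (dn n y1 y2) (dn n y2 y1)) ^ 2 +
        (min (dn n y3 y4) (dn n y4 y3)) ^ 2 +
        (n - min (dn n y3 y4) (dn n y4 y3)) ^ 2 - 2 * delta n := by
  obtain ⟨h1, h1'⟩ := h1
  obtain ⟨h2, h2'⟩ := h2
  have r := fun u v => dn_range n u v hn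
  have t := fun u v w => dn_add n u v w hn
  have z := dn_self n
  have e34 : dn n y3 y4 = dn n y3 y1 + dn n y1 y4 := by
    have := t y3 y1 y4; have := r y1 y4; have := r y3 y1; omega
  have e43 : dn n y4 y3 = dn n y4 y2 + dn n y2 y3 := by
    have := t y4 y2 y3; have := r y2 y3; have := r y4 y2; omega
  have s34 : dn n y3 y4 + dn n y4 y3 = n := by
    have := t y3 y4 y3; have := z y3; omega
  have e13 : dn n y1 y3 = n - dn n y3 y1 := by
    have := t y3 y1 y3; have := z y3; have := r y1 y3; omega
  have e24 : dn n y2 y4 = n - dn n y4 y2 := by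
    have := t y4 y2 y4; have := z y4; have := r y2 y4; omega
  have p14 : 0 < dn n y1 y4 := by omega
  have p23 : 0 < dn n y2 y3 := by omega
  have e12 : dn n y1 y2 = dn n y1 y4 + dn n y4 y2 := by
    have := t y1 y4 y2; have := r y1 y2; omega
  have e21 : dn n y2 y1 = dn n y2 y3 + dn n y3 y1 := by
    have := t y2 y3 y1; have := r y2 y1; omega
  have m1 := min_sq_add n (dn n y1 y2) (dn n y2 y1) (by omega)
  have m3 := min_sq_add n (dn n y3 y4) (dn n y4 y3) s34
  have f1 := two_mul_fn n y1 y3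
  have f2 := two_mul_fn n y1 y4
  have f3 := two_mul_fn n y2 y3
  have f4 := two_mul_fn n y2 y4
  have hf := four_mul_floor n
  have hs : dn n y3 y1 + dn n y1 y4 + dn n y4 y2 + dn n y2 y3 = n := by omega
  have hd := two_mul_delta_le n _ _ _ _ hs
  rw [e12, e21] at m1
  rw [e34, e43] at m3
  rw [e13] at f1
  rw [e24] at f4
  rw [e12, e21, e34, e43]
  generalize dn n y3 y1 = a at *
  generalize dn n y1 y4 = b at *
  generalize dn n y4 y2 = c at *
  generalize dn n y2 y3 = e at *
  generalize delta n = D at *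
  subst hs
  linarith

theorem stmt_12 (n : ℤ) (hn : 3 ≤ n) (y1 y2 y3 y4 : ℤ)
    (hmem : (memOO n y3 y4 y1 ∧ memOO n y4 y3 y2) ∨
            (memOO n y3 y4 y2 ∧ memOO n y4 y3 y1)) :
    4 * (fn n y1 y3 + fn n y1 y4 + fn n y2 y3 + fn n y2 y4 -
        4 * ((n / 2) * ((n - 1) / 2))) ≥
      (min (dn n y1 y2) (dn n y2 y1)) ^ 2 +
        (n - min (dn n y1 y2) (dn n y2 y1)) ^ 2 +
        (min (dn n y3 y4) (dn n y4 y3)) ^ 2 +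
        (n - min (dn n y3 y4) (dn n y4 y3)) ^ 2 - 2 * delta n := by
  rcases hmem with ⟨h1, h2⟩ | ⟨h2, h1⟩
  · exact bound_of_crossing n hn y1 y2 y3 y4 h1 h2
  -- The claim is symmetric under exchanging `y1` and `y2`.
  · have h := bound_of_crossing n hn y2 y1 y3 y4 h2 h1
    rw [min_comm (dn n y2 y1)] at h
    linarith
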